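/- arXiv:2311.03608 — 8 statements merged into one kernel-verified Lean document; each statement's English description precedes it below -/
import Mathlib

section
/- In any HMS model, for every individual i ∈ I and any Υ ⊆ Ψ ⊆ Φ ⊆ At, if ω ∈ S_Φ and Π_i(ω) ⊆ S_Υ, then Π_i(ω_Ψ) = Π_i(ω). -/
/-- The frame underlying HMS (Heifetz–Meier–Schipper) unawareness models: a complete
lattice of nonempty pairwise disjoint state spaces `S Φ` indexed by the subsets
`Φ ⊆ At` of atomic formulas (ordered by inclusion of the index), together with
commuting surjective projections `r Φ Ψ : S Φ → S Ψ` for `Ψ ⊆ Φ`. -/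
structure HMSFrame (At : Type*) (Ω : Type*) where
  S : Set At → Set Ω
  S_nonempty : ∀ Φ : Set At, (S Φ).Nonempty
  S_disjoint : ∀ ⦃Φ Φ' : Set At⦄, Φ ≠ Φ' → Disjoint (S Φ) (S Φ')
  S_cover : ∀ ω : Ω, ∃ Φ : Set At, ω ∈ S Φ
  r : Set At → Set At → Ω → Ω
  r_mem : ∀ ⦃Φ Ψ : Set At⦄, Ψ ⊆ Φ → ∀ ⦃ω : Ω⦄, ω ∈ S Φ → r Φ Ψ ω ∈ S Ψ
  r_surjOn : ∀ ⦃Φ Ψ : Set At⦄, Ψ ⊆ Φ → Set.SurjOn (r Φ Ψ) (S Φ) (S Ψ)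
  r_id : ∀ (Φ : Set At), ∀ ω ∈ S Φ, r Φ Φ ω = ω
  r_comp : ∀ ⦃Φ Ψ Υ : Set At⦄, Υ ⊆ Ψ → Ψ ⊆ Φ → ∀ ω ∈ S Φ, r Ψ Υ (r Φ Ψ ω) = r Φ Υ ω

variable {At Ω : Type*}

/-- `D^↑`, for a subset `D` of the space `S Φ`: all extensions of states in `D` to
(weakly) more expressive spaces. -/
def HMSFrame.up (F : HMSFrame At Ω) (Φ : Set At) (D : Set Ω) : Set Ω :=
  {ω : Ω | ∃ Ψ : Set At, Φ ⊆ Ψ ∧ ω ∈ F.S Ψ ∧ F.r Ψ Φ ω ∈ D}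

/-- `E` is an event with base-space `S Φ` (and base some `D ⊆ S Φ`). -/
def HMSFrame.IsEvent (F : HMSFrame At Ω) (Φ : Set At) (E : Set Ω) : Prop :=
  ∃ D, D ⊆ F.S Φ ∧ E = F.up Φ D

/-- Negation `¬E := (S Φ \ D)^↑` of an event `E` with base-space `S Φ`
(note `S Φ \ E = S Φ \ D` for an event `E` with base `D ⊆ S Φ`). -/
def HMSFrame.neg (F : HMSFrame At Ω) (Φ : Set At) (E : Set Ω) : Set Ω :=
  F.up Φ (F.S Φ \ E)

/-- Properties of the (explicit) possibility correspondence of HMS models: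
nonemptiness, Confinement, Generalized Reflexivity, Stationarity,
Projections Preserve Ignorance, and Projections Preserve Knowledge. -/
structure IsPossibility (F : HMSFrame At Ω) (Pi : Ω → Set Ω) : Prop where
  nonempty : ∀ ω : Ω, (Pi ω).Nonempty
  confinement : ∀ ⦃Φ : Set At⦄ ⦃ω : Ω⦄, ω ∈ F.S Φ → ∃ Ψ, Ψ ⊆ Φ ∧ Pi ω ⊆ F.S Ψ
  genRefl : ∀ ⦃Υ : Set At⦄ ⦃ω : Ω⦄, Pi ω ⊆ F.S Υ → ω ∈ F.up Υ (Pi ω)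
  stationarity : ∀ ⦃ω ω' : Ω⦄, ω' ∈ Pi ω → Pi ω' = Pi ω
  projIgnorance : ∀ ⦃Φ Ψ : Set At⦄ ⦃ω : Ω⦄, ω ∈ F.S Φ → Ψ ⊆ Φ →
    ∀ ⦃Υ Υ' : Set At⦄, Pi ω ⊆ F.S Υ → Pi (F.r Φ Ψ ω) ⊆ F.S Υ' →
      F.up Υ (Pi ω) ⊆ F.up Υ' (Pi (F.r Φ Ψ ω))
  projKnowledge : ∀ ⦃Φ Ψ Υ : Set At⦄ ⦃ω : Ω⦄, Υ ⊆ Ψ → Ψ ⊆ Φ → ω ∈ F.S Φ →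
    Pi ω ⊆ F.S Ψ → F.r Ψ Υ '' Pi ω = Pi (F.r Φ Υ ω)

/-- Properties of an implicit possibility correspondence `La` relative to the
explicit possibility correspondence `Pi`: Reflexivity, Stationarity, Projections
Preserve Implicit Knowledge (whose statement `(Λ(ω))_Ψ = Λ(ω_Ψ)` presupposes that
the projection of `Λ(ω)` is defined, i.e. `Λ(ω) ⊆ S Φ` for `ω ∈ S Φ`),
Explicit Measurability, and Implicit Measurability. -/
structure IsImplicit (F : HMSFrame At Ω) (Pi La : Ω → Set Ω) : Prop where
  refl : ∀ ω : Ω, ω ∈ La ω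
  stationarity : ∀ ⦃ω ω' : Ω⦄, ω' ∈ La ω → La ω' = La ω
  projImplicit : ∀ ⦃Φ : Set At⦄ ⦃ω : Ω⦄, ω ∈ F.S Φ →
    La ω ⊆ F.S Φ ∧ ∀ ⦃Ψ : Set At⦄, Ψ ⊆ Φ → F.r Φ Ψ '' La ω = La (F.r Φ Ψ ω)
  explicitMeas : ∀ ⦃ω ω' : Ω⦄, ω' ∈ La ω → Pi ω' = Pi ω
  implicitMeas : ∀ ⦃Φ Ψ : Set At⦄ ⦃ω ω' : Ω⦄, ω ∈ F.S Φ → Pi ω ⊆ F.S Ψ →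
    ω' ∈ Pi ω → La ω' = F.r Φ Ψ '' La ω

/-- Properties of the primitive implicit possibility correspondence `La` of an
implicit knowledge-based HMS model: nonemptiness, Reflexivity, Stationarity, and
Projections Preserve Implicit Knowledge. -/
structure IsImplicitStar (F : HMSFrame At Ω) (La : Ω → Set Ω) : Prop where
  nonempty : ∀ ω : Ω, (La ω).Nonempty
  refl : ∀ ω : Ω, ω ∈ La ω
  stationarity : ∀ ⦃ω ω' : Ω⦄, ω' ∈ La ω → La ω' = La ω
  projImplicit : ∀ ⦃Φ : Set At⦄ ⦃ω : Ω⦄, ω ∈ F.S Φ →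
    La ω ⊆ F.S Φ ∧ ∀ ⦃Ψ : Set At⦄, Ψ ⊆ Φ → F.r Φ Ψ '' La ω = La (F.r Φ Ψ ω)

/-- Property (O) (Lack of Conception): the awareness level at `ω ∈ S Φ` (encoded
by its index `al ω ⊆ At`, so that the awareness level is the space `S (al ω)`)
is weakly less expressive than `S Φ`. -/
def PropO (F : HMSFrame At Ω) (al : Ω → Set At) : Prop :=
  ∀ ⦃Φ : Set At⦄ ⦃ω : Ω⦄, ω ∈ F.S Φ → al ω ⊆ Φ

/-- Property (I) (Awareness Measurability). -/
def PropI (F : HMSFrame At Ω) (La : Ω → Set Ω) (al : Ω → Set At) : Prop :=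
  ∀ ⦃ω ω' : Ω⦄, ω' ∈ La ω → al ω' = al ω

/-- Property (II): if `ω ∈ S Φ` and `S Ψ ⪯ α(ω)` then `α(ω_Ψ) = S Ψ`. -/
def PropII (F : HMSFrame At Ω) (al : Ω → Set At) : Prop :=
  ∀ ⦃Φ Ψ : Set At⦄ ⦃ω : Ω⦄, ω ∈ F.S Φ → Ψ ⊆ al ω → Ψ ⊆ Φ → al (F.r Φ Ψ ω) = Ψ

/-- Property (III): if `ω ∈ S Φ` and `α(ω) ⪯ S Ψ ⪯ S Φ` then `α(ω_Ψ) = α(ω)`. -/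
def PropIII (F : HMSFrame At Ω) (al : Ω → Set At) : Prop :=
  ∀ ⦃Φ Ψ : Set At⦄ ⦃ω : Ω⦄, ω ∈ F.S Φ → al ω ⊆ Ψ → Ψ ⊆ Φ → al (F.r Φ Ψ ω) = al ω

/-- Property (IV): if `ω ∈ S Φ` and `Ψ ⊆ Φ` then `α(ω) ⪰ α(ω_Ψ)`. -/
def PropIV (F : HMSFrame At Ω) (al : Ω → Set At) : Prop :=
  ∀ ⦃Φ Ψ : Set At⦄ ⦃ω : Ω⦄, ω ∈ F.S Φ → Ψ ⊆ Φ → al (F.r Φ Ψ ω) ⊆ al ω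

/-- `PiS` is the explicit possibility correspondence derived from the implicit
possibility correspondence `La` and the awareness function `al`:
`Π*(ω_Ψ) := (Λ*(ω))_{α(ω_Ψ)}` for all `ω ∈ S Φ` and `Ψ ⊆ Φ`. -/
def DerivedPi (F : HMSFrame At Ω) (La : Ω → Set Ω) (al : Ω → Set At)
    (PiS : Ω → Set Ω) : Prop :=
  ∀ ⦃Φ Ψ : Set At⦄ ⦃ω : Ω⦄, ω ∈ F.S Φ → Ψ ⊆ Φ →
    PiS (F.r Φ Ψ ω) = F.r Φ (al (F.r Φ Ψ ω)) '' La ω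

/-- The (explicit) knowledge operator `K(E) := {ω : Π(ω) ⊆ E}` (as a set this
agrees with the definition with default value `∅^{S(E)}` on the vacuous case). -/
def Kop (F : HMSFrame At Ω) (Pi : Ω → Set Ω) (E : Set Ω) : Set Ω :=
  {ω : Ω | Pi ω ⊆ E}

/-- The implicit knowledge operator `L(E) := {ω : Λ(ω) ⊆ E}`. -/
def Lop (F : HMSFrame At Ω) (La : Ω → Set Ω) (E : Set Ω) : Set Ω :=
  {ω : Ω | La ω ⊆ E}

/-- The awareness operator `A(E) := {ω : S_{Π(ω)} ⪰ S(E)}`, applied to an event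
with base-space `S Φ`. -/
def Aop (F : HMSFrame At Ω) (Pi : Ω → Set Ω) (Φ : Set At) : Set Ω :=
  {ω : Ω | ∃ Ψ : Set At, Φ ⊆ Ψ ∧ Pi ω ⊆ F.S Ψ}

/-- The unawareness operator `U(E) := ¬A(E)`, applied to an event with
base-space `S Φ` (recall `A(E)` is an `S(E)`-based event). -/
def Uop (F : HMSFrame At Ω) (Pi : Ω → Set Ω) (Φ : Set At) : Set Ω :=
  F.neg Φ (Aop F Pi Φ)

/-- The awareness operator `A*(E) := {ω : α(ω) ⪰ S(E)}` defined from the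
awareness function, applied to an event with base-space `S Φ`. -/
def AopStar (al : Ω → Set At) (Φ : Set At) : Set Ω :=
  {ω : Ω | Φ ⊆ al ω}

/-- An HMS model: the frame together with a possibility correspondence for each
individual and a valuation mapping each atomic formula to an event. -/
structure HMSModel (At Ω I : Type*) extends HMSFrame At Ω where
  Pi : I → Ω → Set Ω
  Pi_poss : ∀ i : I, IsPossibility toHMSFrame (Pi i)
  val : At → Set Ω
  val_event : ∀ p : At, ∃ Φ : Set At, toHMSFrame.IsEvent Φ (val p)

/-- A complemented HMS model: an HMS model together with an implicit possibility
correspondence for each individual. -/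
structure CompHMSModel (At Ω I : Type*) extends HMSModel At Ω I where
  La : I → Ω → Set Ω
  La_impl : ∀ i : I, IsImplicit toHMSModel.toHMSFrame (Pi i) (La i)

/-- An implicit knowledge-based HMS model: the frame together with, for each
individual, a primitive implicit possibility correspondence and an awareness
function satisfying (O)-(IV), and a valuation mapping atoms to events. -/
structure ImpHMSModel (At Ω I : Type*) extends HMSFrame At Ω where
  LaS : I → Ω → Set Ω
  LaS_impl : ∀ i : I, IsImplicitStar toHMSFrame (LaS i)
  al : I → Ω → Set At
  al_O : ∀ i : I, PropO toHMSFrame (al i)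
  al_I : ∀ i : I, PropI toHMSFrame (LaS i) (al i)
  al_II : ∀ i : I, PropII toHMSFrame (al i)
  al_III : ∀ i : I, PropIII toHMSFrame (al i)
  al_IV : ∀ i : I, PropIV toHMSFrame (al i)
  val : At → Set Ω
  val_event : ∀ p : At, ∃ Φ : Set At, toHMSFrame.IsEvent Φ (val p)

/-!
Write `S_X` for the space containing `Π(ω_Ψ)`. Preservation of knowledge gives `Π(ω_Υ) = Π(ω)`,
so the states `ω` and `ω_Υ` at the two ends of the chain `ω ↦ ω_Ψ ↦ ω_Υ` have their possibility
sets in the same space `S_Υ`. Preservation of ignorance says that the space of the possibility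
set can only shrink along this chain, which squeezes `X` to `Υ`. Now preservation of knowledge
applies to `ω_Ψ` as well and gives `Π(ω_Ψ) = Π(ω_Υ)`.
-/

namespace HMSFrame

variable (F : HMSFrame At Ω) {Φ Ψ : Set At} {D E : Set Ω} {ω : Ω}

lemma eq_of_mem_S (hΦ : ω ∈ F.S Φ) (hΨ : ω ∈ F.S Ψ) : Φ = Ψ := by
  by_contra hne
  exact Set.disjoint_left.mp (F.S_disjoint hne) hΦ hΨ

lemma subset_up (hD : D ⊆ F.S Φ) : D ⊆ F.up Φ D := fun ω hω =>
  ⟨Φ, subset_rfl, hD hω, by rwa [F.r_id Φ ω (hD hω)]⟩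

lemma subset_of_mem_up (hω : ω ∈ F.S Φ) (hup : ω ∈ F.up Ψ D) : Ψ ⊆ Φ := by
  obtain ⟨Φ', hΨΦ', hω', -⟩ := hup
  exact F.eq_of_mem_S hω' hω ▸ hΨΦ'

lemma subset_of_up_subset_up (hD : D ⊆ F.S Φ) (hne : D.Nonempty)
    (hup : F.up Φ D ⊆ F.up Ψ E) : Ψ ⊆ Φ := by
  obtain ⟨ω, hω⟩ := hne
  exact F.subset_of_mem_up (hD hω) (hup (F.subset_up hD hω))

end HMSFrame

namespace IsPossibility

variable {F : HMSFrame At Ω} {Pi : Ω → Set Ω} {Φ Ψ Υ Υ' : Set At} {ω : Ω}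

lemma subset_of_apply_r_subset (hPi : IsPossibility F Pi) (hΨΦ : Ψ ⊆ Φ) (hω : ω ∈ F.S Φ)
    (hΥ : Pi ω ⊆ F.S Υ) (hΥ' : Pi (F.r Φ Ψ ω) ⊆ F.S Υ') : Υ' ⊆ Υ :=
  F.subset_of_up_subset_up hΥ (hPi.nonempty ω) (hPi.projIgnorance hω hΨΦ hΥ hΥ')

lemma apply_r_eq_of_subset (hPi : IsPossibility F Pi) (hΥΦ : Υ ⊆ Φ) (hω : ω ∈ F.S Φ)
    (hΥ : Pi ω ⊆ F.S Υ) : Pi (F.r Φ Υ ω) = Pi ω := by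
  have hid : Set.EqOn (F.r Υ Υ) id (Pi ω) := fun ω' hω' => F.r_id Υ ω' (hΥ hω')
  rw [← hPi.projKnowledge subset_rfl hΥΦ hω hΥ, hid.image_eq_self]

lemma apply_r_r_eq_of_subset (hPi : IsPossibility F Pi) (hΥΨ : Υ ⊆ Ψ) (hΨΦ : Ψ ⊆ Φ)
    (hω : ω ∈ F.S Φ) (hΥ : Pi ω ⊆ F.S Υ) : Pi (F.r Ψ Υ (F.r Φ Ψ ω)) = Pi ω := by
  rw [F.r_comp hΥΨ hΨΦ ω hω, hPi.apply_r_eq_of_subset (hΥΨ.trans hΨΦ) hω hΥ]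

lemma apply_r_subset_of_subset (hPi : IsPossibility F Pi) (hΥΨ : Υ ⊆ Ψ) (hΨΦ : Ψ ⊆ Φ)
    (hω : ω ∈ F.S Φ) (hΥ : Pi ω ⊆ F.S Υ) : Pi (F.r Φ Ψ ω) ⊆ F.S Υ := by
  have hωΨ : F.r Φ Ψ ω ∈ F.S Ψ := F.r_mem hΨΦ hω
  obtain ⟨X, -, hX⟩ := hPi.confinement hωΨ
  have hωΥ : Pi (F.r Ψ Υ (F.r Φ Ψ ω)) ⊆ F.S Υ :=
    (hPi.apply_r_r_eq_of_subset hΥΨ hΨΦ hω hΥ).trans_subset hΥ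
  have hXΥ : X ⊆ Υ := hPi.subset_of_apply_r_subset hΨΦ hω hΥ hX
  have hΥX : Υ ⊆ X := hPi.subset_of_apply_r_subset hΥΨ hωΨ hX hωΥ
  exact hXΥ.antisymm hΥX ▸ hX

end IsPossibility

/-- In any HMS model, for every individual `i ∈ I` and any
`Υ ⊆ Ψ ⊆ Φ ⊆ At`, if `ω ∈ S_Φ` and `Π_i(ω) ⊆ S_Υ`, then `Π_i(ω_Ψ) = Π_i(ω)`. -/
theorem possibility_at_comparable_projections_equal
    {At Ω I : Type*} [Nonempty At] [Nonempty I]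
    (M : HMSModel At Ω I) (i : I) (Φ Ψ Υ : Set At)
    (hΥΨ : Υ ⊆ Ψ) (hΨΦ : Ψ ⊆ Φ) (ω : Ω) (hω : ω ∈ M.S Φ)
    (hPiw : M.Pi i ω ⊆ M.S Υ) :
    M.Pi i (M.r Φ Ψ ω) = M.Pi i ω := by
  have hPi := M.Pi_poss i
  have hProj : M.Pi i (M.r Φ Ψ ω) ⊆ M.S Υ := hPi.apply_r_subset_of_subset hΥΨ hΨΦ hω hPiw
  calc M.Pi i (M.r Φ Ψ ω)
      = M.Pi i (M.r Ψ Υ (M.r Φ Ψ ω)) :=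
        (hPi.apply_r_eq_of_subset hΥΨ (M.r_mem hΨΦ hω) hProj).symm
    _ = M.Pi i ω := hPi.apply_r_r_eq_of_subset hΥΨ hΨΦ hω hPiw
end

section
/- Projections preserve implicit ignorance: for any individual i ∈ I, if the implicit possibility correspondence Λ_i satisfies Strong Confinement (for every ω ∈ S_Φ, Λ_i(ω) ⊆ S_Φ) and Projections Preserve Implicit Knowledge, then for all Φ ⊆ At, if ω ∈ S_Φ then Λ_i^↑(ω) ⊆ Λ_i^↑(ω_Ψ) for all Ψ ⊆ Φ, where Λ_i^↑(ω) := (Λ_i(ω))^↑. -/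
variable {At Ω : Type*}

namespace HMSFrame

variable (F : HMSFrame At Ω)

theorem up_mono (Φ : Set At) : Monotone (F.up Φ) :=
  fun _ _ hDE _ ⟨Υ, hΦΥ, hω, hωD⟩ ↦ ⟨Υ, hΦΥ, hω, hDE hωD⟩

theorem up_inter_S (Φ : Set At) (D : Set Ω) : F.up Φ (D ∩ F.S Φ) = F.up Φ D :=
  (F.up_mono Φ Set.inter_subset_left).antisymm
    fun _ ⟨Υ, hΦΥ, hω, hωD⟩ ↦ ⟨Υ, hΦΥ, hω, hωD, F.r_mem hΦΥ hω⟩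

theorem up_subset_up_image_r {Φ Ψ : Set At} (hΨΦ : Ψ ⊆ Φ) (D : Set Ω) :
    F.up Φ D ⊆ F.up Ψ (F.r Φ Ψ '' D) := by
  rintro ω ⟨Υ, hΦΥ, hω, hωD⟩
  exact ⟨Υ, hΨΦ.trans hΦΥ, hω, F.r Υ Φ ω, hωD, F.r_comp hΨΦ hΦΥ ω hω⟩

end HMSFrame

/-- The intersection keeps `F.r Φ Ψ` to its domain `F.S Φ`: elsewhere its values are junk. -/
theorem projections_preserve_implicit_ignorance_general
    (F : HMSFrame At Ω) (La : Ω → Set Ω)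
    (hLa : ∀ ⦃Φ Ψ : Set At⦄ ⦃ω : Ω⦄, ω ∈ F.S Φ → Ψ ⊆ Φ →
      F.r Φ Ψ '' (La ω ∩ F.S Φ) ⊆ La (F.r Φ Ψ ω)) :
    ∀ ⦃Φ Ψ : Set At⦄ ⦃ω : Ω⦄, ω ∈ F.S Φ → Ψ ⊆ Φ →
      F.up Φ (La ω) ⊆ F.up Ψ (La (F.r Φ Ψ ω)) := by
  intro Φ Ψ ω hω hΨΦ
  calc F.up Φ (La ω) = F.up Φ (La ω ∩ F.S Φ) := (F.up_inter_S Φ (La ω)).symm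
    _ ⊆ F.up Ψ (F.r Φ Ψ '' (La ω ∩ F.S Φ)) := F.up_subset_up_image_r hΨΦ _
    _ ⊆ F.up Ψ (La (F.r Φ Ψ ω)) := F.up_mono Ψ (hLa hω hΨΦ)

/-- Projections preserve implicit ignorance: for any individual `i`,
if `Λ_i` satisfies Strong Confinement and Projections Preserve Implicit Knowledge,
then for all `Φ ⊆ At`, if `ω ∈ S_Φ` then `Λ_i^↑(ω) ⊆ Λ_i^↑(ω_Ψ)` for all `Ψ ⊆ Φ`. -/
theorem projections_preserve_implicit_ignorance
    {At Ω I : Type*} [Nonempty At] [Nonempty I]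
    (F : HMSFrame At Ω) (La : I → Ω → Set Ω) (i : I)
    (hconf : ∀ ⦃Φ : Set At⦄ ⦃ω : Ω⦄, ω ∈ F.S Φ → La i ω ⊆ F.S Φ)
    (hppik : ∀ ⦃Φ Ψ : Set At⦄ ⦃ω : Ω⦄, ω ∈ F.S Φ → Ψ ⊆ Φ →
      F.r Φ Ψ '' La i ω = La i (F.r Φ Ψ ω)) :
    ∀ ⦃Φ Ψ : Set At⦄ ⦃ω : Ω⦄, ω ∈ F.S Φ → Ψ ⊆ Φ →
      F.up Φ (La i ω) ⊆ F.up Ψ (La i (F.r Φ Ψ ω)) :=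
  projections_preserve_implicit_ignorance_general F (La i) fun _ _ _ hω hΨΦ ↦
    (Set.image_mono Set.inter_subset_left).trans (hppik hω hΨΦ).subset
end

section
/- In any complemented HMS model, for every individual i ∈ I and all states ω, ω' ∈ Ω: if ω' ∈ Π_i(ω), then Λ_i(ω') = Π_i(ω'). -/
variable {At Ω : Type*}

/-!
Call `ω ∈ S Φ` *fully aware* when `Π(ω) ⊆ S Φ`. Every element of a possibility set is fully aware,
so it suffices to show `Λ(ω) = Π(ω)` at a fully aware `ω`. There no projection intervenes:
Generalized Reflexivity becomes `ω ∈ Π(ω)`, and Implicit Measurability says that `Λ` is constant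
on `Π(ω)`. Explicit Measurability carries full awareness from `ω` to each `x ∈ Λ(ω)`, whence
`x ∈ Π(x) = Π(ω)`; conversely each `x ∈ Π(ω)` satisfies `x ∈ Λ(x) = Λ(ω)`.
-/

section FullAwareness

variable {F : HMSFrame At Ω} {Pi La : Ω → Set Ω} {Φ Ψ : Set At} {D : Set Ω} {ω x : Ω}

theorem HMSFrame.index_unique (hΦ : ω ∈ F.S Φ) (hΨ : ω ∈ F.S Ψ) : Φ = Ψ := by
  by_contra hne
  exact Set.disjoint_left.mp (F.S_disjoint hne) hΦ hΨ

theorem HMSFrame.mem_of_mem_up (hω : ω ∈ F.S Φ) (hup : ω ∈ F.up Φ D) : ω ∈ D := by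
  obtain ⟨Ψ, -, hωΨ, hr⟩ := hup
  obtain rfl : Ψ = Φ := HMSFrame.index_unique hωΨ hω
  rwa [F.r_id Ψ ω hωΨ] at hr

theorem IsPossibility.mem_self (hPi : IsPossibility F Pi) (hω : ω ∈ F.S Φ)
    (haware : Pi ω ⊆ F.S Φ) : ω ∈ Pi ω :=
  HMSFrame.mem_of_mem_up hω (hPi.genRefl haware)

theorem IsPossibility.exists_aware_of_mem (hPi : IsPossibility F Pi) (hx : x ∈ Pi ω) :
    ∃ Ψ, x ∈ F.S Ψ ∧ Pi x ⊆ F.S Ψ := by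
  obtain ⟨Φ, hω⟩ := F.S_cover ω
  obtain ⟨Ψ, -, hΨ⟩ := hPi.confinement hω
  exact ⟨Ψ, hΨ hx, (hPi.stationarity hx).trans_subset hΨ⟩

theorem IsImplicit.eq_of_mem_explicit (hLa : IsImplicit F Pi La) (hω : ω ∈ F.S Φ)
    (haware : Pi ω ⊆ F.S Φ) (hx : x ∈ Pi ω) : La x = La ω :=
  calc
    La x = F.r Φ Φ '' La ω := hLa.implicitMeas hω haware hx
    _ = La (F.r Φ Φ ω) := (hLa.projImplicit hω).2 Set.Subset.rfl
    _ = La ω := by rw [F.r_id Φ ω hω]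

theorem IsImplicit.subset_explicit (hLa : IsImplicit F Pi La) (hPi : IsPossibility F Pi)
    (hω : ω ∈ F.S Φ) (haware : Pi ω ⊆ F.S Φ) : La ω ⊆ Pi ω := by
  intro x hx
  have hxΦ : x ∈ F.S Φ := (hLa.projImplicit hω).1 hx
  have hPix : Pi x = Pi ω := hLa.explicitMeas hx
  exact hPix ▸ hPi.mem_self hxΦ (hPix.trans_subset haware)

theorem IsImplicit.explicit_subset (hLa : IsImplicit F Pi La) (hω : ω ∈ F.S Φ)
    (haware : Pi ω ⊆ F.S Φ) : Pi ω ⊆ La ω :=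
  fun x hx ↦ hLa.eq_of_mem_explicit hω haware hx ▸ hLa.refl x

end FullAwareness

/-- In any complemented HMS model, for every individual `i ∈ I` and
all states `ω, ω' ∈ Ω`: if `ω' ∈ Π_i(ω)`, then `Λ_i(ω') = Π_i(ω')`. -/
theorem implicit_eq_explicit_on_possibility_set
    {At Ω I : Type*} [Nonempty At] [Nonempty I]
    (M : CompHMSModel At Ω I) (i : I) (ω ω' : Ω) (h : ω' ∈ M.Pi i ω) :
    M.La i ω' = M.Pi i ω' := by
  obtain ⟨Ψ, hω', haware⟩ := (M.Pi_poss i).exists_aware_of_mem h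
  exact ((M.La_impl i).subset_explicit (M.Pi_poss i) hω' haware).antisymm
    ((M.La_impl i).explicit_subset hω' haware)
end

section
/- In any complemented HMS model, for every individual i ∈ I, the implicit knowledge operator L_i satisfies, for all events E, F and every family of events {E_n}_n: (i) Necessitation: L_i(S_Φ^↑) = S_Φ^↑ for every Φ ⊆ At; (ii) Conjunction: L_i(⋂_n E_n) = ⋂_n L_i(E_n); (iii) Monotonicity: E ⊆ F implies L_i(E) ⊆ L_i(F); (iv) Truth: L_i(E) ⊆ E; (v) Positive Introspection: L_i(E) ⊆ L_i(L_i(E)); (vi) Negative Introspection: ¬L_i(E) ⊆ L_i(¬L_i(E)). -/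
variable {At Ω : Type*}

theorem HMSFrame.mem_up_iff_of_mem_S {F : HMSFrame At Ω} {Φ Ψ : Set At} {D : Set Ω} {ω : Ω}
    (hω : ω ∈ F.S Ψ) : ω ∈ F.up Φ D ↔ Φ ⊆ Ψ ∧ F.r Ψ Φ ω ∈ D := by
  refine ⟨?_, fun ⟨hΦΨ, hD⟩ => ⟨Ψ, hΦΨ, hω, hD⟩⟩
  rintro ⟨Ψ', hΦΨ', hω', hD⟩
  obtain rfl : Ψ' = Ψ := by
    by_contra hne
    exact Set.disjoint_left.mp (F.S_disjoint hne) hω' hω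
  exact ⟨hΦΨ', hD⟩

section ImplicitKnowledge

variable {F : HMSFrame At Ω} {La : Ω → Set Ω}

theorem Lop_mono {E E' : Set Ω} (hE : E ⊆ E') : Lop F La E ⊆ Lop F La E' :=
  fun _ hω => hω.trans hE

theorem Lop_iInter {ι : Sort*} (E : ι → Set Ω) :
    Lop F La (⋂ n, E n) = ⋂ n, Lop F La (E n) := by
  ext ω
  simp only [Lop, Set.mem_ofPred_eq, Set.mem_iInter, Set.subset_iInter_iff]

theorem IsImplicit.isImplicitStar {Pi : Ω → Set Ω} (h : IsImplicit F Pi La) :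
    IsImplicitStar F La where
  nonempty ω := ⟨ω, h.refl ω⟩
  refl := h.refl
  stationarity := h.stationarity
  projImplicit := h.projImplicit

namespace IsImplicitStar

theorem Lop_subset (h : IsImplicitStar F La) (E : Set Ω) : Lop F La E ⊆ E :=
  fun ω hω => hω (h.refl ω)

theorem Lop_Lop (h : IsImplicitStar F La) (E : Set Ω) :
    Lop F La (Lop F La E) = Lop F La E :=
  (h.Lop_subset _).antisymm fun _ hω _ hω' => (h.stationarity hω').subset.trans hω

theorem Lop_S (h : IsImplicitStar F La) (Φ : Set At) : Lop F La (F.S Φ) = F.S Φ :=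
  (h.Lop_subset _).antisymm fun _ hω => (h.projImplicit hω).1

theorem Lop_diff_Lop (h : IsImplicitStar F La) {D : Set Ω} (hD : Lop F La D = D) (E : Set Ω) :
    Lop F La (D \ Lop F La E) = D \ Lop F La E := by
  refine (h.Lop_subset _).antisymm fun ω ⟨hωD, hωE⟩ ω' hω' => ⟨?_, fun hω'E => hωE ?_⟩
  · exact hD.superset hωD hω'
  · exact (h.stationarity hω').superset.trans hω'E

theorem Lop_up (h : IsImplicitStar F La) (Φ : Set At) (D : Set Ω) :
    Lop F La (F.up Φ D) = F.up Φ (Lop F La D) := by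
  ext ω
  obtain ⟨Ψ, hω⟩ := F.S_cover ω
  obtain ⟨hcell, hproj⟩ := h.projImplicit hω
  rw [HMSFrame.mem_up_iff_of_mem_S hω]
  constructor
  · intro hknown
    obtain ⟨hΦΨ, -⟩ := (HMSFrame.mem_up_iff_of_mem_S hω).mp (hknown (h.refl ω))
    refine ⟨hΦΨ, (hproj hΦΨ).superset.trans (Set.image_subset_iff.mpr fun ω' hω' => ?_)⟩
    exact ((HMSFrame.mem_up_iff_of_mem_S (hcell hω')).mp (hknown hω')).2
  · rintro ⟨hΦΨ, hknown⟩ ω' hω'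
    have hω'Φ : F.r Ψ Φ ω' ∈ La (F.r Ψ Φ ω) :=
      (hproj hΦΨ).subset (Set.mem_image_of_mem _ hω')
    exact (HMSFrame.mem_up_iff_of_mem_S (hcell hω')).mpr ⟨hΦΨ, hknown hω'Φ⟩

theorem Lop_up_S (h : IsImplicitStar F La) (Φ : Set At) :
    Lop F La (F.up Φ (F.S Φ)) = F.up Φ (F.S Φ) := by
  rw [h.Lop_up, h.Lop_S]

theorem Lop_neg_Lop (h : IsImplicitStar F La) (Φ : Set At) (E : Set Ω) :
    Lop F La (F.neg Φ (Lop F La E)) = F.neg Φ (Lop F La E) := by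
  rw [HMSFrame.neg, h.Lop_up, h.Lop_diff_Lop (h.Lop_S Φ)]

end IsImplicitStar

theorem implicit_knowledge_S5_general (h : IsImplicitStar F La) :
    (∀ Φ : Set At, Lop F La (F.up Φ (F.S Φ)) = F.up Φ (F.S Φ)) ∧
    (∀ {ι : Sort*} (E : ι → Set Ω), Lop F La (⋂ n, E n) = ⋂ n, Lop F La (E n)) ∧
    (∀ E E' : Set Ω, E ⊆ E' → Lop F La E ⊆ Lop F La E') ∧
    (∀ E : Set Ω, Lop F La E ⊆ E) ∧
    (∀ E : Set Ω, Lop F La (Lop F La E) = Lop F La E) ∧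
    (∀ (Φ : Set At) (E : Set Ω),
      Lop F La (F.neg Φ (Lop F La E)) = F.neg Φ (Lop F La E)) :=
  ⟨h.Lop_up_S, Lop_iInter, fun _ _ => Lop_mono, h.Lop_subset, h.Lop_Lop, h.Lop_neg_Lop⟩

end ImplicitKnowledge

/-- In any complemented HMS model, for every individual `i ∈ I`, the
implicit knowledge operator `L_i` satisfies (i) Necessitation, (ii) Conjunction,
(iii) Monotonicity, (iv) Truth, (v) Positive Introspection, and
(vi) Negative Introspection. -/
theorem implicit_knowledge_S5
    {At Ω I : Type*} [Nonempty At] [Nonempty I]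
    (M : CompHMSModel At Ω I) (i : I) :
    -- (i) Necessitation: `L_i(S_Φ^↑) = S_Φ^↑`
    (∀ Φ : Set At,
      Lop M.toHMSFrame (M.La i) (M.toHMSFrame.up Φ (M.S Φ)) =
        M.toHMSFrame.up Φ (M.S Φ)) ∧
    -- (ii) Conjunction: `L_i(⋂ₙ Eₙ) = ⋂ₙ L_i(Eₙ)`
    (∀ (ι : Type) [Nonempty ι] (Φ : ι → Set At) (E : ι → Set Ω),
      (∀ n : ι, M.toHMSFrame.IsEvent (Φ n) (E n)) →
      Lop M.toHMSFrame (M.La i) (⋂ n : ι, E n) =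
        ⋂ n : ι, Lop M.toHMSFrame (M.La i) (E n)) ∧
    -- (iii) Monotonicity: `E ⊆ F` implies `L_i(E) ⊆ L_i(F)`
    (∀ (Φ Φ' : Set At) (E E' : Set Ω), M.toHMSFrame.IsEvent Φ E →
      M.toHMSFrame.IsEvent Φ' E' → E ⊆ E' →
      Lop M.toHMSFrame (M.La i) E ⊆ Lop M.toHMSFrame (M.La i) E') ∧
    -- (iv) Truth: `L_i(E) ⊆ E`
    (∀ (Φ : Set At) (E : Set Ω), M.toHMSFrame.IsEvent Φ E →
      Lop M.toHMSFrame (M.La i) E ⊆ E) ∧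
    -- (v) Positive Introspection: `L_i(E) ⊆ L_i(L_i(E))`
    (∀ (Φ : Set At) (E : Set Ω), M.toHMSFrame.IsEvent Φ E →
      Lop M.toHMSFrame (M.La i) E ⊆
        Lop M.toHMSFrame (M.La i) (Lop M.toHMSFrame (M.La i) E)) ∧
    -- (vi) Negative Introspection: `¬L_i(E) ⊆ L_i(¬L_i(E))`
    (∀ (Φ : Set At) (E : Set Ω), M.toHMSFrame.IsEvent Φ E →
      M.toHMSFrame.neg Φ (Lop M.toHMSFrame (M.La i) E) ⊆
        Lop M.toHMSFrame (M.La i)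
          (M.toHMSFrame.neg Φ (Lop M.toHMSFrame (M.La i) E))) := by
  obtain ⟨necessitation, conjunction, monotonicity, truth, positive, negative⟩ :=
    implicit_knowledge_S5_general (M.La_impl i).isImplicitStar
  exact ⟨necessitation, fun _ _ _ E _ => conjunction E, fun _ _ E E' _ _ => monotonicity E E',
    fun _ E _ => truth E, fun _ E _ => (positive E).superset,
    fun Φ E _ => (negative Φ E).superset⟩
end

section
/- In any complemented HMS model, for every individual i ∈ I and every event E, explicit knowledge equals implicit knowledge plus awareness: K_i(E) = L_i(E) ∩ A_i(E). -/
variable {At Ω : Type*}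

/-!
Explicit possibility is implicit possibility projected to the awareness space,
`Π(ω) = (Λ(ω))_{S_{Π(ω)}}`: the inclusion `⊆` is Implicit Measurability together with Reflexivity
of `Λ`, and `⊇` is Explicit Measurability together with Generalized Reflexivity of `Π`. Projecting
a state does not change whether it lies in an event `E`, as long as the target space is at least as
expressive as `S(E)`. So wherever there is awareness of `E`, explicit and implicit knowledge of
`E` coincide; and explicit knowledge of `E` entails awareness of `E`, since the nonempty set
`Π(ω)` can only meet `E` in a space at least as expressive as `S(E)`.
-/

namespace HMSFrame

theorem index_unique_s7 (F : HMSFrame At Ω) {Φ Ψ : Set At} {ω : Ω}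
    (hΦ : ω ∈ F.S Φ) (hΨ : ω ∈ F.S Ψ) : Φ = Ψ :=
  by_contra fun h => Set.disjoint_left.mp (F.S_disjoint h) hΦ hΨ

theorem mem_up_iff (F : HMSFrame At Ω) {Φ Ψ : Set At} {D : Set Ω} {ω : Ω}
    (hω : ω ∈ F.S Ψ) : ω ∈ F.up Φ D ↔ Φ ⊆ Ψ ∧ F.r Ψ Φ ω ∈ D := by
  constructor
  · rintro ⟨Ψ', hΦ, hω', hD⟩
    obtain rfl := F.index_unique_s7 hω hω'
    exact ⟨hΦ, hD⟩
  · rintro ⟨hΦ, hD⟩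
    exact ⟨Ψ, hΦ, hω, hD⟩

theorem r_mem_up_iff (F : HMSFrame At Ω) {Φ Ψ Υ : Set At} {D : Set Ω} {ω : Ω}
    (hΥΨ : Υ ⊆ Ψ) (hΨΦ : Ψ ⊆ Φ) (hω : ω ∈ F.S Φ) :
    F.r Φ Ψ ω ∈ F.up Υ D ↔ ω ∈ F.up Υ D := by
  rw [F.mem_up_iff (F.r_mem hΨΦ hω), F.mem_up_iff hω, F.r_comp hΥΨ hΨΦ ω hω]
  simp only [hΥΨ, hΥΨ.trans hΨΦ]

theorem image_r_subset_up_iff (F : HMSFrame At Ω) {Φ Ψ Υ : Set At} {B D : Set Ω}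
    (hΥΨ : Υ ⊆ Ψ) (hΨΦ : Ψ ⊆ Φ) (hB : B ⊆ F.S Φ) :
    F.r Φ Ψ '' B ⊆ F.up Υ D ↔ B ⊆ F.up Υ D :=
  Set.image_subset_iff.trans <|
    forall₂_congr fun _ hω => F.r_mem_up_iff hΥΨ hΨΦ (hB hω)

end HMSFrame

namespace IsPossibility

variable {F : HMSFrame At Ω} {Pi : Ω → Set Ω} {Φ Ψ : Set At} {ω : Ω}

theorem index_subset (hPi : IsPossibility F Pi) (hω : ω ∈ F.S Φ) (hΨ : Pi ω ⊆ F.S Ψ) : Ψ ⊆ Φ :=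
  ((F.mem_up_iff hω).mp (hPi.genRefl hΨ)).1

theorem r_mem (hPi : IsPossibility F Pi) (hω : ω ∈ F.S Φ) (hΨ : Pi ω ⊆ F.S Ψ) :
    F.r Φ Ψ ω ∈ Pi ω :=
  ((F.mem_up_iff hω).mp (hPi.genRefl hΨ)).2

theorem kop_subset_aop (hPi : IsPossibility F Pi) {E : Set Ω} (hE : F.IsEvent Φ E) :
    Kop F Pi E ⊆ Aop F Pi Φ := by
  obtain ⟨D, -, rfl⟩ := hE
  intro ω hK
  obtain ⟨Υ, hω⟩ := F.S_cover ω
  obtain ⟨Ψ, -, hΨ⟩ := hPi.confinement hω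
  obtain ⟨ω', hω'⟩ := hPi.nonempty ω
  exact ⟨Ψ, ((F.mem_up_iff (hΨ hω')).mp (hK hω')).1, hΨ⟩

end IsPossibility

namespace IsImplicit

variable {F : HMSFrame At Ω} {Pi La : Ω → Set Ω} {Φ Ψ : Set At} {ω : Ω}

theorem la_subset (hLa : IsImplicit F Pi La) (hω : ω ∈ F.S Φ) : La ω ⊆ F.S Φ :=
  (hLa.projImplicit hω).1

theorem image_r_la (hLa : IsImplicit F Pi La) (hPi : IsPossibility F Pi)
    (hω : ω ∈ F.S Φ) (hΨ : Pi ω ⊆ F.S Ψ) : F.r Φ Ψ '' La ω = Pi ω := by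
  apply Set.Subset.antisymm
  · rintro _ ⟨ω', hω', rfl⟩
    have hPi' : Pi ω' = Pi ω := hLa.explicitMeas hω'
    exact hPi' ▸ hPi.r_mem (hLa.la_subset hω hω') (hPi'.trans_subset hΨ)
  · intro ω' hω'
    exact hLa.implicitMeas hω hΨ hω' ▸ hLa.refl ω'

theorem mem_kop_iff_mem_lop (hLa : IsImplicit F Pi La) (hPi : IsPossibility F Pi)
    {E : Set Ω} (hE : F.IsEvent Φ E) (hA : ω ∈ Aop F Pi Φ) :
    ω ∈ Kop F Pi E ↔ ω ∈ Lop F La E := by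
  obtain ⟨D, -, rfl⟩ := hE
  obtain ⟨Ψ, hΦΨ, hΨ⟩ := hA
  obtain ⟨Υ, hω⟩ := F.S_cover ω
  change Pi ω ⊆ F.up Φ D ↔ La ω ⊆ F.up Φ D
  rw [← hLa.image_r_la hPi hω hΨ]
  exact F.image_r_subset_up_iff hΦΨ (hPi.index_subset hω hΨ) (hLa.la_subset hω)

end IsImplicit

/-- In any complemented HMS model, for every individual `i ∈ I` and
every event `E`, explicit knowledge equals implicit knowledge plus awareness:
`K_i(E) = L_i(E) ∩ A_i(E)`. -/
theorem explicit_eq_implicit_inter_awareness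
    {At Ω I : Type*} [Nonempty At] [Nonempty I]
    (M : CompHMSModel At Ω I) (i : I) (Φ : Set At) (E : Set Ω)
    (hE : M.toHMSFrame.IsEvent Φ E) :
    Kop M.toHMSFrame (M.Pi i) E =
      Lop M.toHMSFrame (M.La i) E ∩ Aop M.toHMSFrame (M.Pi i) Φ := by
  have hKA : Kop M.toHMSFrame (M.Pi i) E ⊆ Aop M.toHMSFrame (M.Pi i) Φ :=
    (M.Pi_poss i).kop_subset_aop hE
  have hKL {ω : Ω} (hA : ω ∈ Aop M.toHMSFrame (M.Pi i) Φ) :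
      ω ∈ Kop M.toHMSFrame (M.Pi i) E ↔ ω ∈ Lop M.toHMSFrame (M.La i) E :=
    (M.La_impl i).mem_kop_iff_mem_lop (M.Pi_poss i) hE hA
  ext ω
  constructor
  · intro hK
    exact ⟨(hKL (hKA hK)).mp hK, hKA hK⟩
  · rintro ⟨hL, hA⟩
    exact (hKL hA).mpr hL
end

section
/- In any complemented HMS model, for every individual i ∈ I and every event E, the individual implicitly knows her unawareness: U_i(E) = L_i(U_i(E)). -/
variable {At Ω : Type*}

/-!
`U(E)` is the upward closure of the states of `S(E)` at which the individual is unaware of `E`.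
Awareness at a state is read off from `Π`, so by explicit measurability no state `ω` of this base
implicitly considers a state outside it possible. Since projections carry `Λ(ω)` into `Λ(ω_Φ)`,
implicit knowledge of an event only has to be tested on its base.
-/

/-- `La` respects the spaces and projections of the frame: states considered possible at `ω` lie in
the space of `ω`, and their projections are considered possible at the projection of `ω`. Only the
inclusion `(Λ(ω))_Ψ ⊆ Λ(ω_Ψ)` of Projections Preserve Implicit Knowledge is demanded. -/
structure ProjectionCompatible (F : HMSFrame At Ω) (La : Ω → Set Ω) : Prop where
  subset_space : ∀ ⦃Φ : Set At⦄ ⦃ω : Ω⦄, ω ∈ F.S Φ → La ω ⊆ F.S Φ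
  mapsTo : ∀ ⦃Φ Ψ : Set At⦄ ⦃ω : Ω⦄, ω ∈ F.S Φ → Ψ ⊆ Φ →
    Set.MapsTo (F.r Φ Ψ) (La ω) (La (F.r Φ Ψ ω))

section

variable {F : HMSFrame At Ω} {Pi La : Ω → Set Ω} {Φ : Set At}

theorem IsImplicit.projectionCompatible (h : IsImplicit F Pi La) : ProjectionCompatible F La where
  subset_space _ _ hω := (h.projImplicit hω).1
  mapsTo _ _ _ hω hΨ := Set.mapsTo_iff_image_subset.2 ((h.projImplicit hω).2 hΨ).subset

theorem Lop_subset (hrefl : ∀ ω, ω ∈ La ω) (E : Set Ω) : Lop F La E ⊆ E :=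
  fun ω hω => hω (hrefl ω)

theorem ProjectionCompatible.up_subset_Lop_up (h : ProjectionCompatible F La) {D : Set Ω}
    (hD : D ⊆ Lop F La D) : F.up Φ D ⊆ Lop F La (F.up Φ D) := by
  rintro ω ⟨Ψ, hΦΨ, hω, hωD⟩ ω' hω'
  exact ⟨Ψ, hΦΨ, h.subset_space hω hω', hD hωD (h.mapsTo hω hΦΨ hω')⟩

theorem ProjectionCompatible.neg_subset_Lop_neg (h : ProjectionCompatible F La) {E : Set Ω}
    (hE : ∀ ⦃ω ω'⦄, ω' ∈ La ω → ω' ∈ E → ω ∈ E) : F.neg Φ E ⊆ Lop F La (F.neg Φ E) :=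
  h.up_subset_Lop_up fun _ hω _ hω' => ⟨h.subset_space hω.1 hω', fun hE' => hω.2 (hE hω' hE')⟩

theorem mem_Aop_congr {ω ω' : Ω} (h : Pi ω' = Pi ω) : ω' ∈ Aop F Pi Φ ↔ ω ∈ Aop F Pi Φ := by
  simp only [Aop, Set.mem_ofPred_eq, h]

theorem implicitly_knows_unawareness_general (hrefl : ∀ ω, ω ∈ La ω)
    (hproj : ProjectionCompatible F La) (hmeas : ∀ ⦃ω ω'⦄, ω' ∈ La ω → Pi ω' = Pi ω) :
    Uop F Pi Φ = Lop F La (Uop F Pi Φ) :=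
  Set.Subset.antisymm
    (hproj.neg_subset_Lop_neg fun _ _ hω' => (mem_Aop_congr (hmeas hω')).1)
    (Lop_subset hrefl _)

end

/-- In any complemented HMS model, for every individual `i ∈ I` and
every event `E`, the individual implicitly knows her unawareness:
`U_i(E) = L_i(U_i(E))`. -/
theorem implicitly_knows_unawareness
    {At Ω I : Type*} [Nonempty At] [Nonempty I]
    (M : CompHMSModel At Ω I) (i : I) (Φ : Set At) (E : Set Ω)
    (hE : M.toHMSFrame.IsEvent Φ E) :
    Uop M.toHMSFrame (M.Pi i) Φ =
      Lop M.toHMSFrame (M.La i) (Uop M.toHMSFrame (M.Pi i) Φ) :=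
  have hLa := M.La_impl i
  implicitly_knows_unawareness_general hLa.refl hLa.projectionCompatible hLa.explicitMeas
end

section
/- In any implicit knowledge-based HMS model, for every individual i ∈ I, if α_i satisfies properties (O), (II), and (III), then Reflexivity of Λ*_i implies that the derived explicit possibility correspondence Π*_i satisfies Generalized Reflexivity: ω ∈ (Π*_i(ω))^↑ for every ω ∈ Ω. -/
variable {At Ω : Type*}

/-!
For `ω ∈ S Φ`, the defining equation of `Π*` at the trivial projection `ω = ω_Φ` reads
`Π*(ω) = (Λ*(ω))_{α(ω)}`, so Reflexivity of `Λ*` puts `ω_{α(ω)}` into `Π*(ω)`; property (O) makes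
this a projection to a weakly less expressive space, whence `ω ∈ (Π*(ω))^↑` with base space `α(ω)`.
By disjointness of the state spaces, no other space can contain the nonempty set `Π*(ω)`.
-/

theorem HMSFrame.index_eq_of_mem (F : HMSFrame At Ω) {Φ Ψ : Set At} {ω : Ω}
    (hΦ : ω ∈ F.S Φ) (hΨ : ω ∈ F.S Ψ) : Φ = Ψ :=
  by_contra fun hne ↦ Set.disjoint_left.1 (F.S_disjoint hne) hΦ hΨ

namespace DerivedPi

variable {F : HMSFrame At Ω} {La PiS : Ω → Set Ω} {al : Ω → Set At} {Φ Υ : Set At} {ω : Ω}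

theorem eq_image (hPiS : DerivedPi F La al PiS) (hω : ω ∈ F.S Φ) :
    PiS ω = F.r Φ (al ω) '' La ω := by
  simpa only [F.r_id Φ ω hω] using hPiS hω subset_rfl

theorem proj_mem (hPiS : DerivedPi F La al PiS) (hrefl : ω ∈ La ω) (hω : ω ∈ F.S Φ) :
    F.r Φ (al ω) ω ∈ PiS ω := by
  rw [hPiS.eq_image hω]
  exact Set.mem_image_of_mem _ hrefl

theorem mem_up (hPiS : DerivedPi F La al PiS) (hO : PropO F al) (hrefl : ω ∈ La ω) :
    ω ∈ F.up (al ω) (PiS ω) := by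
  obtain ⟨Φ, hω⟩ := F.S_cover ω
  exact ⟨Φ, hO hω, hω, hPiS.proj_mem hrefl hω⟩

theorem awareness_eq_of_subset (hPiS : DerivedPi F La al PiS) (hO : PropO F al)
    (hrefl : ω ∈ La ω) (hΥ : PiS ω ⊆ F.S Υ) : al ω = Υ := by
  obtain ⟨Φ, hω⟩ := F.S_cover ω
  exact F.index_eq_of_mem (F.r_mem (hO hω) hω) (hΥ (hPiS.proj_mem hrefl hω))

end DerivedPi

theorem derived_pi_generalized_reflexivity_general
    {F : HMSFrame At Ω} {La PiS : Ω → Set Ω} {al : Ω → Set At}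
    (hrefl : ∀ ω, ω ∈ La ω) (hPiS : DerivedPi F La al PiS) (hO : PropO F al)
    ⦃Υ : Set At⦄ ⦃ω : Ω⦄ (hΥ : PiS ω ⊆ F.S Υ) : ω ∈ F.up Υ (PiS ω) := by
  have hbase : al ω = Υ := hPiS.awareness_eq_of_subset hO (hrefl ω) hΥ
  exact hbase ▸ hPiS.mem_up hO (hrefl ω)

/-- In any implicit knowledge-based HMS model, for every individual
`i ∈ I`, if `α_i` satisfies properties (O), (II), and (III), then Reflexivity of
`Λ*_i` implies that the derived explicit possibility correspondence `Π*_i`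
satisfies Generalized Reflexivity: `ω ∈ (Π*_i(ω))^↑` for every `ω ∈ Ω`. -/
theorem derived_pi_generalized_reflexivity
    {At Ω I : Type*} [Nonempty At] [Nonempty I]
    (F : HMSFrame At Ω) (La : I → Ω → Set Ω) (al : I → Ω → Set At)
    (PiS : I → Ω → Set Ω) (i : I)
    (hLa : IsImplicitStar F (La i))
    (hPiS : DerivedPi F (La i) (al i) (PiS i))
    (hO : PropO F (al i)) (hII : PropII F (al i)) (hIII : PropIII F (al i)) :
    ∀ ⦃Υ : Set At⦄ ⦃ω : Ω⦄, PiS i ω ⊆ F.S Υ → ω ∈ F.up Υ (PiS i ω) :=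
  derived_pi_generalized_reflexivity_general hLa.refl hPiS hO
end

section
/- In any implicit knowledge-based HMS model, for every individual i ∈ I, if α_i satisfies properties (II) and (III), then the derived explicit possibility correspondence Π*_i satisfies Projections Preserve Knowledge: if Υ ⊆ Ψ ⊆ Φ ⊆ At, ω ∈ S_Φ and Π*_i(ω) ⊆ S_Ψ, then (Π*_i(ω))_Υ = Π*_i(ω_Υ). -/
variable {At Ω : Type*}

namespace HMSFrame

variable (F : HMSFrame At Ω)

lemma index_eq_of_mem_s16 {Φ Ψ : Set At} {ω : Ω} (hΦ : ω ∈ F.S Φ) (hΨ : ω ∈ F.S Ψ) : Φ = Ψ := by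
  by_contra hne
  exact Set.disjoint_left.mp (F.S_disjoint hne) hΦ hΨ

lemma image_r_subset {Φ Ψ : Set At} {D : Set Ω} (hΨΦ : Ψ ⊆ Φ) (hD : D ⊆ F.S Φ) :
    F.r Φ Ψ '' D ⊆ F.S Ψ :=
  Set.image_subset_iff.mpr fun _ hω => F.r_mem hΨΦ (hD hω)

lemma image_r_image_r {Φ Ψ Υ : Set At} {D : Set Ω} (hΥΨ : Υ ⊆ Ψ) (hΨΦ : Ψ ⊆ Φ)
    (hD : D ⊆ F.S Φ) : F.r Ψ Υ '' (F.r Φ Ψ '' D) = F.r Φ Υ '' D := by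
  rw [Set.image_image]
  exact Set.image_congr fun ω hω => F.r_comp hΥΨ hΨΦ ω (hD hω)

end HMSFrame

/-- `La` does not leave the space of a state: `Λ(ω) ⊆ S Φ` whenever `ω ∈ S Φ`. This is what gives
meaning to the projections `(Λ(ω))_Ψ`, `Ψ ⊆ Φ`; Confinement of an explicit correspondence allows a
less expressive space instead. -/
def IsSpacePreserving (F : HMSFrame At Ω) (La : Ω → Set Ω) : Prop :=
  ∀ ⦃Φ : Set At⦄ ⦃ω : Ω⦄, ω ∈ F.S Φ → La ω ⊆ F.S Φ

lemma IsImplicitStar.isSpacePreserving {F : HMSFrame At Ω} {La : Ω → Set Ω}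
    (hLa : IsImplicitStar F La) : IsSpacePreserving F La :=
  fun _ _ hω => (hLa.projImplicit hω).1

namespace DerivedPi

variable {F : HMSFrame At Ω} {La : Ω → Set Ω} {al : Ω → Set At} {PiS : Ω → Set Ω}

lemma eq_image_r (hPi : DerivedPi F La al PiS) {Φ : Set At} {ω : Ω} (hω : ω ∈ F.S Φ) :
    PiS ω = F.r Φ (al ω) '' La ω := by
  simpa only [F.r_id Φ ω hω] using hPi hω subset_rfl

lemma subset_awareness_space (hPi : DerivedPi F La al PiS) (hLa : IsSpacePreserving F La)
    (ω : Ω) : PiS ω ⊆ F.S (al ω) := by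
  obtain ⟨Φ, hω⟩ := F.S_cover ω
  -- `al ω ⊆ Φ` may fail, so `PiS ω` is computed from a lift of `ω` to the top space, from which
  -- every space can be reached by a projection.
  obtain ⟨τ, hτ, rfl⟩ := F.r_surjOn (Set.subset_univ Φ) hω
  rw [hPi hτ (Set.subset_univ Φ)]
  exact F.image_r_subset (Set.subset_univ _) (hLa hτ)

end DerivedPi

theorem derived_pi_projections_preserve_knowledge_general
    {F : HMSFrame At Ω} {La : Ω → Set Ω} {al : Ω → Set At} {PiS : Ω → Set Ω}
    (hLa : IsSpacePreserving F La) (hPi : DerivedPi F La al PiS) (hII : PropII F al)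
    ⦃Φ Ψ Υ : Set At⦄ ⦃ω : Ω⦄ (hΥΨ : Υ ⊆ Ψ) (hΨΦ : Ψ ⊆ Φ) (hω : ω ∈ F.S Φ)
    (hΨ : PiS ω ⊆ F.S Ψ) : F.r Ψ Υ '' PiS ω = PiS (F.r Φ Υ ω) := by
  have hΥΦ : Υ ⊆ Φ := hΥΨ.trans hΨΦ
  have hPiω : PiS ω = F.r Φ (al ω) '' La ω := hPi.eq_image_r hω
  obtain hempty | ⟨ω', hω'⟩ := (La ω).eq_empty_or_nonempty
  · simp only [hPiω, hPi hω hΥΦ, hempty, Set.image_empty]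
  have hmem : F.r Φ (al ω) ω' ∈ PiS ω := hPiω ▸ Set.mem_image_of_mem _ hω'
  obtain rfl : al ω = Ψ :=
    F.index_eq_of_mem_s16 (hPi.subset_awareness_space hLa ω hmem) (hΨ hmem)
  calc F.r (al ω) Υ '' PiS ω
      = F.r (al ω) Υ '' (F.r Φ (al ω) '' La ω) := by rw [hPiω]
    _ = F.r Φ Υ '' La ω := F.image_r_image_r hΥΨ hΨΦ (hLa hω)
    _ = PiS (F.r Φ Υ ω) := by rw [hPi hω hΥΦ, hII hω hΥΨ hΥΦ]

/-- In any implicit knowledge-based HMS model, for every individual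
`i ∈ I`, if `α_i` satisfies properties (II) and (III), then the derived explicit
possibility correspondence `Π*_i` satisfies Projections Preserve Knowledge: if
`Υ ⊆ Ψ ⊆ Φ ⊆ At`, `ω ∈ S_Φ` and `Π*_i(ω) ⊆ S_Ψ`, then
`(Π*_i(ω))_Υ = Π*_i(ω_Υ)`. -/
theorem derived_pi_projections_preserve_knowledge
    {At Ω I : Type*} [Nonempty At] [Nonempty I]
    (F : HMSFrame At Ω) (La : I → Ω → Set Ω) (al : I → Ω → Set At)
    (PiS : I → Ω → Set Ω) (i : I)
    (hLa : IsImplicitStar F (La i))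
    (hPiS : DerivedPi F (La i) (al i) (PiS i))
    (hII : PropII F (al i)) (hIII : PropIII F (al i)) :
    ∀ ⦃Φ Ψ Υ : Set At⦄ ⦃ω : Ω⦄, Υ ⊆ Ψ → Ψ ⊆ Φ → ω ∈ F.S Φ →
      PiS i ω ⊆ F.S Ψ → F.r Ψ Υ '' PiS i ω = PiS i (F.r Φ Υ ω) :=
  derived_pi_projections_preserve_knowledge_general hLa.isSpacePreserving hPiS hII
end
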